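/- arXiv:1410.1669 — 4 statements merged into one kernel-verified Lean document; each statement's English description precedes it below -/
import Mathlib

section
/- Let c > 1 be a real constant and k ≥ 1 an integer. For any finite simple graph G of order n with minimum degree δ ≥ c·k − 1, the k-tuple domination number satisfies the strict inequality γ_{×k}(G) < (c/(δ+1) + e^{−0.5·k·(c + 1/c − 2)}) · k·n. -/
open Finset Real

/-- The k-tuple domination number: the minimum cardinality of a set X such that every
vertex has at least k members of X in its closed neighbourhood. -/
noncomputable def kTupleDomNum {V : Type*} [Fintype V] [DecidableEq V]
    (G : SimpleGraph V) [DecidableRel G.Adj] (k : ℕ) : ℕ :=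
  sInf {m : ℕ | ∃ X : Finset V,
    (∀ v, k ≤ ((insert v (G.neighborFinset v)) ∩ X).card) ∧ m = X.card}

lemma ktd_le {V : Type*} [Fintype V] [DecidableEq V]
    (G : SimpleGraph V) [DecidableRel G.Adj] (k : ℕ) (hk : k ≤ G.minDegree + 1) (X : Finset V) :
    kTupleDomNum G k ≤ X.card + ∑ v, (k - ((insert v (G.neighborFinset v)) ∩ X).card) := by
  have hcard : ∀ v, (insert v (G.neighborFinset v)).card = G.degree v + 1 := by
    intro v
    rw [Finset.card_insert_of_notMem (by simp), SimpleGraph.card_neighborFinset_eq_degree]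
  have h : ∀ v, ∃ A ⊆ (insert v (G.neighborFinset v)) \ X,
      A.card = k - ((insert v (G.neighborFinset v)) ∩ X).card := by
    intro v
    apply Finset.exists_subset_card_eq
    have h1 := Finset.card_sdiff_add_card_inter (insert v (G.neighborFinset v)) X
    have h2 := hcard v
    have h3 := G.minDegree_le_degree v
    omega
  choose A hA hAc using h
  have hY : kTupleDomNum G k ≤ (X ∪ Finset.univ.biUnion A).card := by
    apply Nat.sInf_le
    refine ⟨_, ?_, rfl⟩
    intro v
    have hd : Disjoint ((insert v (G.neighborFinset v)) ∩ X) (A v) := by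
      rw [Finset.disjoint_left]
      intro a ha hb
      have := hA v hb
      simp only [Finset.mem_inter, Finset.mem_sdiff] at ha this
      exact this.2 ha.2
    have hs : ((insert v (G.neighborFinset v)) ∩ X) ∪ A v ⊆
        (insert v (G.neighborFinset v)) ∩ (X ∪ Finset.univ.biUnion A) := by
      intro a ha
      rw [Finset.mem_union] at ha
      rw [Finset.mem_inter, Finset.mem_union]
      rcases ha with ha | ha
      · rw [Finset.mem_inter] at ha
        exact ⟨ha.1, Or.inl ha.2⟩
      · have := hA v ha
        rw [Finset.mem_sdiff] at this
        exact ⟨this.1, Or.inr (Finset.mem_biUnion.2 ⟨v, Finset.mem_univ _, ha⟩)⟩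
    have h1 := Finset.card_le_card hs
    rw [Finset.card_union_of_disjoint hd, hAc] at h1
    omega
  refine hY.trans ((Finset.card_union_le _ _).trans ?_)
  gcongr
  refine Finset.card_biUnion_le.trans ?_
  exact Finset.sum_le_sum fun v _ => (hAc v).le

/-- weight of a random set -/
noncomputable def ktdW {V : Type*} [Fintype V] [DecidableEq V] (p : ℝ) (X : Finset V) : ℝ :=
  (∏ _i ∈ X, p) * ∏ _i ∈ Finset.univ \ X, (1 - p)

lemma ktdW_sum {V : Type*} [Fintype V] [DecidableEq V] (p : ℝ) :
    ∑ X : Finset V, ktdW p X = 1 := by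
  have := Finset.prod_add (fun _ : V => p) (fun _ => 1 - p) Finset.univ
  simp only [Finset.powerset_univ] at this
  unfold ktdW
  rw [← this]
  simp

lemma ktdW_gen {V : Type*} [Fintype V] [DecidableEq V] (p t : ℝ) (S : Finset V) :
    ∑ X : Finset V, ktdW p X * t ^ (S ∩ X).card = (p * t + (1 - p)) ^ S.card := by
  have := Finset.prod_add (fun v : V => p * if v ∈ S then t else 1) (fun _ => 1 - p) Finset.univ
  simp only [Finset.powerset_univ] at this
  calc _ = ∏ i : V, ((p * if i ∈ S then t else 1) + (1 - p)) := by
        rw [this]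
        refine Finset.sum_congr rfl fun X _ => ?_
        rw [Finset.prod_mul_distrib, Finset.prod_ite_mem, Finset.inter_comm X S]
        have ht : ∏ _i ∈ S ∩ X, t = t ^ (S ∩ X).card := Finset.prod_const t
        rw [ht]
        unfold ktdW
        ring
    _ = ∏ i : V, (if i ∈ S then (p * t + (1 - p)) else 1) := by
        refine Finset.prod_congr rfl fun i _ => ?_
        split_ifs <;> ring
    _ = _ := by rw [Finset.prod_ite_mem]; simp

lemma ktdW_mem {V : Type*} [Fintype V] [DecidableEq V] (p : ℝ) (v : V) :
    ∑ X : Finset V, ktdW p X * (if v ∈ X then 1 else 0) = p := by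
  have h := ktdW_gen p 0 ({v} : Finset V)
  have h1 := ktdW_sum (V := V) p
  have h2 : ∑ X : Finset V, ktdW p X * (if v ∈ X then 1 else 0) =
      ∑ X : Finset V, ktdW p X - ∑ X : Finset V, ktdW p X * 0 ^ (({v} : Finset V) ∩ X).card := by
    rw [← Finset.sum_sub_distrib]
    refine Finset.sum_congr rfl fun X _ => ?_
    by_cases hv : v ∈ X
    · simp [hv]
    · simp [hv]
  rw [h2, h, h1]
  simp

lemma ktdW_card {V : Type*} [Fintype V] [DecidableEq V] (p : ℝ) :
    ∑ X : Finset V, ktdW p X * (X.card : ℝ) = Fintype.card V * p := by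
  have : ∀ X : Finset V, ktdW p X * (X.card : ℝ) =
      ∑ v : V, ktdW p X * (if v ∈ X then 1 else 0) := by
    intro X
    rw [← Finset.mul_sum]
    simp
  simp_rw [this]
  rw [Finset.sum_comm]
  simp_rw [ktdW_mem]
  simp

lemma ktd_point (c : ℝ) (hc : 1 < c) (k B B' : ℕ) (hB : B ≤ B') :
    ((k - B' : ℕ) : ℝ) ≤ k * c ^ k * (c⁻¹) ^ B := by
  have hc0 : 0 < c := by linarith
  by_cases h : k ≤ B'
  · rw [Nat.sub_eq_zero_of_le h]
    push_cast
    positivity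
  · have h1 : c ^ k * c⁻¹ ^ B = c ^ (k - B) := by
      rw [inv_pow, pow_sub₀ _ hc0.ne' (by omega)]
    rw [mul_assoc, h1]
    have h2 : (1 : ℝ) ≤ c ^ (k - B) := one_le_pow₀ hc.le
    have h3 : ((k - B' : ℕ) : ℝ) ≤ k := by exact_mod_cast Nat.sub_le _ _
    have : (0:ℝ) ≤ k := by positivity
    nlinarith

lemma ktd_anal (c : ℝ) (hc : 1 < c) (k d : ℕ) (hk : 1 ≤ k) (p : ℝ) (hp1 : p ≤ 1) (hp0 : 0 ≤ p)
    (hp : p * d = c * k) :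
    c ^ k * (p * c⁻¹ + (1 - p)) ^ d < Real.exp (-(0.5 * k * (c + 1 / c - 2))) := by
  have hc0 : 0 < c := by linarith
  have h1 : p * c⁻¹ + (1 - p) ≤ Real.exp (-(p * (1 - c⁻¹))) := by
    have := Real.add_one_le_exp (-(p * (1 - c⁻¹)))
    linarith
  have h0 : 0 ≤ p * c⁻¹ + (1 - p) := by
    have : 0 ≤ p * c⁻¹ := by positivity
    linarith
  have h2 : (p * c⁻¹ + (1 - p)) ^ d ≤ Real.exp (-((c - 1) * k)) := by
    refine (pow_le_pow_left₀ h0 h1 d).trans_eq ?_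
    rw [← Real.exp_nat_mul]
    congr 1
    calc _ = -((p * d) * (1 - c⁻¹)) := by ring
      _ = _ := by rw [hp]; field_simp
  have h3 : c ^ k = Real.exp (k * Real.log c) := by
    rw [Real.exp_nat_mul, Real.exp_log hc0]
  have h4 : Real.log c < (c - c⁻¹) / 2 := by
    rw [← Real.sinh_log hc0, Real.self_lt_sinh_iff]
    exact Real.log_pos hc
  have hk' : (0:ℝ) < k := by exact_mod_cast hk
  calc _ ≤ c ^ k * Real.exp (-((c - 1) * k)) := by gcongr
    _ = Real.exp (k * Real.log c + -((c - 1) * k)) := by rw [h3, ← Real.exp_add]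
    _ < _ := by
      rw [Real.exp_lt_exp, one_div]
      have := mul_lt_mul_of_pos_left h4 hk'
      linarith

theorem k_tuple_domination_threshold_bound
    {V : Type*} [Fintype V] [DecidableEq V]
    (G : SimpleGraph V) [DecidableRel G.Adj]
    (n : ℕ) (hn : n = Fintype.card V)
    (δ : ℕ) (hδ : δ = G.minDegree)
    (c : ℝ) (hc : 1 < c)
    (k : ℕ) (hk : 1 ≤ k)
    (hcδ : c * k - 1 ≤ (δ : ℝ)) :
    (kTupleDomNum G k : ℝ) <
      (c / ((δ : ℝ) + 1) + Real.exp (-(0.5 * k * (c + 1 / c - 2)))) * ((k : ℝ) * n) := by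
  have hc0 : 0 < c := by linarith
  have hk' : (1:ℝ) ≤ k := by exact_mod_cast hk
  have hkd : k ≤ δ + 1 := by
    have : (k : ℝ) ≤ δ + 1 := by nlinarith
    exact_mod_cast this
  have hn0 : 0 < n := by
    rcases Nat.eq_zero_or_pos n with h | h
    · exfalso
      have : IsEmpty V := Fintype.card_eq_zero_iff.1 (hn ▸ h)
      have hd : δ = 0 := by rw [hδ]; simp
      rw [hd] at hcδ
      push_cast at hcδ
      nlinarith
    · exact h
  set p : ℝ := c * k / ((δ : ℝ) + 1) with hpdef
  have hd0 : (0:ℝ) < (δ : ℝ) + 1 := by positivity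
  have hp0 : 0 ≤ p := by positivity
  have hp1 : p ≤ 1 := by rw [hpdef, div_le_one hd0]; linarith
  have hpd : p * ((δ + 1 : ℕ) : ℝ) = c * k := by
    push_cast
    rw [hpdef]; field_simp
  have hS : ∀ v, ∃ S ⊆ insert v (G.neighborFinset v), S.card = δ + 1 := by
    intro v
    apply Finset.exists_subset_card_eq
    rw [Finset.card_insert_of_notMem (by simp), SimpleGraph.card_neighborFinset_eq_degree]
    have := G.minDegree_le_degree v
    omega
  choose S hSs hSc using hS
  have hW : ∀ X : Finset V, 0 ≤ ktdW p X := by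
    intro X
    have : 0 ≤ 1 - p := by linarith
    exact mul_nonneg (Finset.prod_nonneg fun _ _ => hp0) (Finset.prod_nonneg fun _ _ => this)
  have key : ∀ X : Finset V, (kTupleDomNum G k : ℝ) ≤
      X.card + ∑ v, k * c ^ k * (c⁻¹) ^ (S v ∩ X).card := by
    intro X
    have h1 : (kTupleDomNum G k : ℝ) ≤ ((X.card +
        ∑ v, (k - ((insert v (G.neighborFinset v)) ∩ X).card) : ℕ) : ℝ) := by
      exact_mod_cast ktd_le G k (hδ ▸ hkd) X
    refine h1.trans ?_
    push_cast
    gcongr with v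
    exact ktd_point c hc k _ _ (Finset.card_le_card (Finset.inter_subset_inter_right (hSs v)))
  have hn' : (0:ℝ) < n := by exact_mod_cast hn0
  calc (kTupleDomNum G k : ℝ) = ∑ X : Finset V, ktdW p X * (kTupleDomNum G k : ℝ) := by
        rw [← Finset.sum_mul, ktdW_sum, one_mul]
    _ ≤ ∑ X : Finset V, ktdW p X * (X.card + ∑ v, k * c ^ k * (c⁻¹) ^ (S v ∩ X).card) :=
        Finset.sum_le_sum fun X _ => mul_le_mul_of_nonneg_left (key X) (hW X)
    _ = n * p + ∑ v, k * c ^ k * ∑ X : Finset V, ktdW p X * (c⁻¹) ^ (S v ∩ X).card := by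
        simp_rw [mul_add, Finset.sum_add_distrib, ktdW_card, ← hn]
        congr 1
        simp_rw [Finset.mul_sum]
        rw [Finset.sum_comm]
        refine Finset.sum_congr rfl fun v _ => Finset.sum_congr rfl fun X _ => ?_
        ring
    _ = n * p + n * k * (c ^ k * (p * c⁻¹ + (1 - p)) ^ (δ + 1)) := by
        simp_rw [ktdW_gen, hSc]
        simp only [Finset.sum_const, Finset.card_univ, ← hn, nsmul_eq_mul]
        ring
    _ < n * p + n * k * Real.exp (-(0.5 * k * (c + 1 / c - 2))) := by
        have := ktd_anal c hc k (δ + 1) hk p hp1 hp0 hpd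
        gcongr
    _ = _ := by rw [hpdef]; ring
end

section
/- Let c > 1 be a real constant and k ≥ 1, l ≥ 1 integers with μ = max{k, l}. For any finite simple graph G of order n with minimum degree δ ≥ c·μ − 1, the parametric domination number satisfies the strict inequality γ_{k,l}(G) < (c/(δ+1) + e^{−0.5·μ·(c + 1/c − 2)}) · μ·n. -/
open Finset Real

/-- The parametric domination number γ_{k,l}: the minimum cardinality of a set D such that
every vertex outside D has at least k members of D in its closed neighbourhood, and every
vertex of D has at least l members of D in its closed neighbourhood. -/
noncomputable def paramDomNum {V : Type*} [Fintype V] [DecidableEq V]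
    (G : SimpleGraph V) [DecidableRel G.Adj] (k l : ℕ) : ℕ :=
  sInf {m : ℕ | ∃ D : Finset V,
    (∀ v, v ∉ D → k ≤ ((insert v (G.neighborFinset v)) ∩ D).card) ∧
    (∀ v, v ∈ D → l ≤ ((insert v (G.neighborFinset v)) ∩ D).card) ∧
    m = D.card}

/-- Completion of a set to a set hitting each `N v` at least `μ` times. -/
lemma pd_complete {V : Type*} [Fintype V] [DecidableEq V] (N : V → Finset V) (μ : ℕ)
    (hN : ∀ v, μ ≤ (N v).card) (A : Finset V) :
    ∃ D : Finset V, (∀ v, μ ≤ (N v ∩ D).card) ∧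
      D.card ≤ A.card + ∑ v, (μ - (N v ∩ A).card) := by
  have h : ∀ v, ∃ B : Finset V, B ⊆ N v \ A ∧ B.card = μ - (N v ∩ A).card := by
    intro v
    apply Finset.exists_subset_card_eq
    have h1 := Finset.card_sdiff_add_card_inter (N v) A
    have h2 := hN v
    omega
  choose B hB hBc using h
  refine ⟨A ∪ Finset.univ.biUnion B, ?_, ?_⟩
  · intro v
    have h1 : (N v ∩ A) ∪ B v ⊆ N v ∩ (A ∪ Finset.univ.biUnion B) := by
      intro x hx
      rcases Finset.mem_union.1 hx with hx | hx
      · have := Finset.mem_inter.1 hx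
        simp [this.1, this.2]
      · have := Finset.mem_sdiff.1 (hB v hx)
        simp only [Finset.mem_inter, Finset.mem_union, Finset.mem_biUnion, Finset.mem_univ,
          true_and]
        exact ⟨this.1, Or.inr ⟨v, hx⟩⟩
    have h2 : Disjoint (N v ∩ A) (B v) := by
      rw [Finset.disjoint_left]
      intro x hx hx'
      exact (Finset.mem_sdiff.1 (hB v hx')).2 (Finset.mem_inter.1 hx).2
    have h3 := Finset.card_le_card h1
    rw [Finset.card_union_of_disjoint h2, hBc] at h3
    omega
  · refine (Finset.card_union_le _ _).trans ?_
    gcongr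
    refine Finset.card_biUnion_le.trans ?_
    exact Finset.sum_le_sum fun v _ => (hBc v).le

/-- Bernoulli weights. -/
noncomputable def pdW {V : Type*} [Fintype V] [DecidableEq V] (p : ℝ) (A : Finset V) : ℝ :=
  (∏ _i ∈ A, p) * ∏ _i ∈ Finset.univ \ A, (1 - p)

lemma pdW_nonneg {V : Type*} [Fintype V] [DecidableEq V] (p : ℝ) (h0 : 0 ≤ p) (h1 : p ≤ 1)
    (A : Finset V) : 0 ≤ pdW p A :=
  mul_nonneg (Finset.prod_nonneg fun _ _ => h0)
    (Finset.prod_nonneg fun _ _ => sub_nonneg.2 h1)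

lemma pdW_sum {V : Type*} [Fintype V] [DecidableEq V] (p : ℝ) :
    ∑ A ∈ (Finset.univ : Finset V).powerset, pdW p A = 1 := by
  unfold pdW
  rw [← Finset.prod_add]
  simp

lemma pdW_card {V : Type*} [Fintype V] [DecidableEq V] (p : ℝ) :
    ∑ A ∈ (Finset.univ : Finset V).powerset, pdW p A * (A.card : ℝ) = p * Fintype.card V := by
  have h : ∀ u : V, ∑ A ∈ (Finset.univ : Finset V).powerset,
      pdW p A * (if u ∈ A then 1 else 0) = p := by
    intro u
    have h1 := Finset.prod_add (fun _ : V => p) (fun v => if v = u then 0 else 1 - p) Finset.univ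
    have h2 : ∏ v : V, (p + if v = u then 0 else 1 - p) = p := by
      rw [Finset.prod_eq_single u]
      · simp
      · intro b _ hb
        simp [hb]
      · simp
    rw [h2] at h1
    refine Eq.trans ?_ h1.symm
    refine Finset.sum_congr rfl fun A _ => ?_
    unfold pdW
    rw [mul_assoc]
    congr 1
    by_cases hu : u ∈ A
    · rw [if_pos hu, mul_one]
      refine Finset.prod_congr rfl fun v hv => ?_
      rw [if_neg]
      rintro rfl
      exact (Finset.mem_sdiff.1 hv).2 hu
    · rw [if_neg hu, mul_zero]
      symm
      apply Finset.prod_eq_zero (i := u)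
      · simp [hu]
      · simp
  have h3 : ∀ A : Finset V, (A.card : ℝ) = ∑ u : V, if u ∈ A then (1 : ℝ) else 0 := by
    intro A; simp
  simp_rw [h3, Finset.mul_sum]
  rw [Finset.sum_comm]
  simp_rw [h]
  simp [mul_comm]

lemma pdW_pow {V : Type*} [Fintype V] [DecidableEq V] (p x : ℝ) (N : Finset V) :
    ∑ A ∈ (Finset.univ : Finset V).powerset, pdW p A * x ^ (N ∩ A).card
      = (p * x + (1 - p)) ^ N.card := by
  have h1 := Finset.prod_add (fun v : V => p * if v ∈ N then x else 1)
    (fun _ => 1 - p) Finset.univ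
  have h2 : ∏ v : V, ((p * if v ∈ N then x else 1) + (1 - p))
      = (p * x + (1 - p)) ^ N.card := by
    rw [← Finset.prod_const, ← Finset.prod_subset (Finset.subset_univ N)]
    · refine Finset.prod_congr rfl fun v hv => ?_
      simp [hv]
    · intro v _ hv
      simp [hv]
  rw [← h2, h1]
  refine Finset.sum_congr rfl fun A _ => ?_
  unfold pdW
  rw [Finset.prod_mul_distrib, ← Finset.prod_filter, Finset.filter_mem_eq_inter,
    Finset.inter_comm A N, Finset.prod_const x]
  ring

lemma pd_pointwise (c : ℝ) (hc : 1 < c) (μ x : ℕ) :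
    ((μ - x : ℕ) : ℝ) ≤ μ * c ^ μ * (1 / c) ^ x := by
  have hc0 : 0 < c := by linarith
  rcases le_total μ x with h | h
  · rw [Nat.sub_eq_zero_of_le h]
    simp only [Nat.cast_zero]
    positivity
  · have h1 : c ^ μ * (1 / c) ^ x = c ^ (μ - x) := by
      rw [one_div, inv_pow, pow_sub₀ _ hc0.ne' h]
    rw [mul_assoc, h1]
    have h2 : (1 : ℝ) ≤ c ^ (μ - x) := one_le_pow₀ hc.le
    have h3 : ((μ - x : ℕ) : ℝ) ≤ μ := by exact_mod_cast Nat.sub_le _ _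
    nlinarith [(Nat.cast_nonneg μ : (0 : ℝ) ≤ μ)]

lemma pd_analytic (c : ℝ) (hc : 1 < c) (μ m M : ℕ) (hμ : 1 ≤ μ) (hm : 0 < m) (hmM : m ≤ M)
    (hp : c * μ / m ≤ 1) :
    c ^ μ * (c * μ / m * (1 / c) + (1 - c * μ / m)) ^ M
      < Real.exp (-(0.5 * μ * (c + 1 / c - 2))) := by
  have hc0 : 0 < c := by linarith
  have hm0 : (0 : ℝ) < m := by exact_mod_cast hm
  have hμ0 : (0 : ℝ) < μ := by exact_mod_cast hμ
  set p := c * μ / m with hpd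
  have hp0 : 0 < p := by positivity
  have hx : 1 / c < 1 := by rw [div_lt_one hc0]; exact hc
  have hx0 : 0 < 1 / c := by positivity
  have hb0 : 0 ≤ p * (1 / c) + (1 - p) := by nlinarith [mul_pos hp0 hx0]
  have hb1 : p * (1 / c) + (1 - p) ≤ 1 := by nlinarith
  have h1 : (p * (1 / c) + (1 - p)) ^ M ≤ (p * (1 / c) + (1 - p)) ^ m :=
    pow_le_pow_of_le_one hb0 hb1 hmM
  have h2 : p * (1 / c) + (1 - p) ≤ Real.exp (-(p * (1 - 1 / c))) := by
    have := Real.add_one_le_exp (-(p * (1 - 1 / c)))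
    linarith
  have h3 : (p * (1 / c) + (1 - p)) ^ m ≤ Real.exp (-(μ * (c - 1))) := by
    refine (pow_le_pow_left₀ hb0 h2 m).trans (le_of_eq ?_)
    rw [← Real.exp_nat_mul]
    congr 1
    rw [hpd]
    field_simp
  have h4 : c ^ μ = Real.exp (μ * Real.log c) := by
    rw [Real.exp_nat_mul, Real.exp_log hc0]
  have h5 : Real.log c < (c - 1 / c) / 2 := by
    have h := Real.self_lt_sinh_iff.2 (Real.log_pos hc)
    rw [Real.sinh_log hc0] at h
    simpa using h
  calc c ^ μ * (p * (1 / c) + (1 - p)) ^ M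
      ≤ c ^ μ * Real.exp (-(μ * (c - 1))) := by
        gcongr
        exact h1.trans h3
    _ = Real.exp (μ * Real.log c + -(μ * (c - 1))) := by rw [h4, Real.exp_add]
    _ < _ := by
        apply Real.exp_lt_exp.2
        nlinarith [mul_lt_mul_of_pos_left h5 hμ0]

theorem param_domination_threshold_bound
    {V : Type*} [Fintype V] [DecidableEq V]
    (G : SimpleGraph V) [DecidableRel G.Adj]
    (n : ℕ) (hn : n = Fintype.card V)
    (δ : ℕ) (hδ : δ = G.minDegree)
    (c : ℝ) (hc : 1 < c)
    (k l : ℕ) (hk : 1 ≤ k) (hl : 1 ≤ l)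
    (μ : ℕ) (hμ : μ = max k l)
    (hcδ : c * μ - 1 ≤ (δ : ℝ)) :
    (paramDomNum G k l : ℝ) <
      (c / ((δ : ℝ) + 1) + Real.exp (-(0.5 * μ * (c + 1 / c - 2)))) * ((μ : ℝ) * n) := by
  have hc0 : 0 < c := by linarith
  have hkμ : k ≤ μ := by omega
  have hlμ : l ≤ μ := by omega
  have hμ1 : 1 ≤ μ := by omega
  have hμ0 : (1 : ℝ) ≤ μ := by exact_mod_cast hμ1
  have hμδ : μ ≤ δ + 1 := by
    have : (μ : ℝ) ≤ δ + 1 := by nlinarith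
    exact_mod_cast this
  have hne : Nonempty V := by
    by_contra hV
    rw [not_nonempty_iff] at hV
    have : δ = 0 := by rw [hδ]; exact G.minDegree_of_subsingleton
    rw [this] at hcδ
    push_cast at hcδ
    nlinarith
  have hn0 : 0 < n := by rw [hn]; exact Fintype.card_pos
  have hnR : (0 : ℝ) < n := by exact_mod_cast hn0
  set N : V → Finset V := fun v => insert v (G.neighborFinset v) with hNdef
  have hNc : ∀ v, δ + 1 ≤ (N v).card := by
    intro v
    have h1 := G.minDegree_le_degree v
    rw [hNdef]
    simp only
    rw [Finset.card_insert_of_notMem (by simp), SimpleGraph.card_neighborFinset_eq_degree]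
    omega
  set E := Real.exp (-(0.5 * μ * (c + 1 / c - 2))) with hE
  set p : ℝ := c * μ / ((δ + 1 : ℕ) : ℝ) with hp
  have hδ0 : (0 : ℝ) < ((δ + 1 : ℕ) : ℝ) := by positivity
  have hp0 : 0 ≤ p := by positivity
  have hp1 : p ≤ 1 := by
    rw [hp, div_le_one hδ0]
    push_cast
    linarith
  set R := (c / ((δ : ℝ) + 1) + E) * ((μ : ℝ) * n) with hR
  have hRe : R = p * n + μ * n * E := by
    rw [hR, hp]; push_cast; ring
  -- it suffices to find a good set
  suffices h : ∃ A : Finset V, (A.card : ℝ) + ∑ v, ((μ - (N v ∩ A).card : ℕ) : ℝ) < R by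
    obtain ⟨A, hA⟩ := h
    obtain ⟨D, hD, hDc⟩ := pd_complete N μ (fun v => hμδ.trans (hNc v)) A
    have h1 : paramDomNum G k l ≤ D.card :=
      Nat.sInf_le ⟨D, fun v _ => hkμ.trans (hD v), fun v _ => hlμ.trans (hD v), rfl⟩
    have h2 : (paramDomNum G k l : ℝ) ≤
        ((A.card + ∑ v, (μ - (N v ∩ A).card) : ℕ) : ℝ) := by exact_mod_cast h1.trans hDc
    rw [Nat.cast_add, Nat.cast_sum] at h2
    exact h2.trans_lt hA
  by_contra! hcon
  have hlow : R ≤ ∑ A ∈ (Finset.univ : Finset V).powerset,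
      pdW p A * ((A.card : ℝ) + ∑ v, (μ * c ^ μ * (1 / c) ^ (N v ∩ A).card)) := by
    calc R = ∑ A ∈ (Finset.univ : Finset V).powerset, pdW p A * R := by
          rw [← Finset.sum_mul, pdW_sum, one_mul]
      _ ≤ _ := by
          refine Finset.sum_le_sum fun A _ => ?_
          refine mul_le_mul_of_nonneg_left ((hcon A).trans ?_) (pdW_nonneg p hp0 hp1 A)
          gcongr with v
          exact pd_pointwise c hc μ _
  have hval : ∑ A ∈ (Finset.univ : Finset V).powerset,
      pdW p A * ((A.card : ℝ) + ∑ v, (μ * c ^ μ * (1 / c) ^ (N v ∩ A).card))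
      = p * n + ∑ v, μ * (c ^ μ * (p * (1 / c) + (1 - p)) ^ (N v).card) := by
    simp_rw [mul_add, Finset.sum_add_distrib, Finset.mul_sum]
    rw [pdW_card, hn, Finset.sum_comm]
    congr 1
    refine Finset.sum_congr rfl fun v _ => ?_
    rw [← pdW_pow, Finset.mul_sum, Finset.mul_sum]
    refine Finset.sum_congr rfl fun A _ => ?_
    ring
  have hlt : ∑ v, μ * (c ^ μ * (p * (1 / c) + (1 - p)) ^ (N v).card) < ∑ _v : V, μ * E := by
    refine Finset.sum_lt_sum_of_nonempty Finset.univ_nonempty fun v _ => ?_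
    refine mul_lt_mul_of_pos_left ?_ (by linarith)
    exact pd_analytic c hc μ (δ + 1) _ hμ1 (Nat.succ_pos _) (hNc v) hp1
  rw [Finset.sum_const, Finset.card_univ, ← hn, nsmul_eq_mul] at hlt
  rw [hval, hRe] at hlow
  nlinarith
end

section
/- Let 0 < c < 1 be a real constant and k ≥ 1 an integer. For any finite simple graph G of order n with minimum degree δ such that k ≤ (1−c)·ln δ, the k-tuple domination number satisfies the strict inequality γ_{×k}(G) < (ln δ/(δ+1) + k/δ^{0.5·c²}) · n. -/
open Finset Real

lemma aux_extend {V : Type*} [Fintype V] [DecidableEq V]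
    (N : V → Finset V) (k : ℕ) (hN : ∀ v, k ≤ (N v).card) (X : Finset V) :
    ∃ Y : Finset V, (∀ v, k ≤ (N v ∩ Y).card) ∧
      Y.card ≤ X.card + ∑ v, (k - (N v ∩ X).card) := by
  have h : ∀ v, ∃ A ⊆ N v \ X, A.card = k - (N v ∩ X).card := by
    intro v
    apply Finset.exists_subset_card_eq
    have := Finset.card_sdiff_add_card_inter (N v) X
    have := hN v
    omega
  choose A hA hAc using h
  refine ⟨X ∪ univ.biUnion A, ?_, ?_⟩
  · intro v
    have hd : Disjoint (N v ∩ X) (A v) := by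
      rw [Finset.disjoint_left]
      intro x hx hx'
      have := hA v hx'
      simp at this hx
      exact this.2 hx.2
    have hs : (N v ∩ X) ∪ A v ⊆ N v ∩ (X ∪ univ.biUnion A) := by
      intro x hx
      rcases Finset.mem_union.1 hx with hx | hx
      · simp at hx ⊢
        exact ⟨hx.1, Or.inl hx.2⟩
      · have := hA v hx
        simp at this ⊢
        exact ⟨this.1, Or.inr ⟨v, hx⟩⟩
    have h1 := Finset.card_le_card hs
    rw [Finset.card_union_of_disjoint hd, hAc] at h1
    omega
  · refine (Finset.card_union_le _ _).trans ?_
    gcongr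
    refine Finset.card_biUnion_le.trans ?_
    simp [hAc]

noncomputable def wt {V : Type*} [Fintype V] [DecidableEq V] (p : ℝ) (X : Finset V) : ℝ :=
  (∏ _i ∈ X, p) * ∏ _i ∈ univ \ X, (1 - p)

lemma wt_nonneg {V : Type*} [Fintype V] [DecidableEq V] (p : ℝ) (h0 : 0 ≤ p) (h1 : p ≤ 1)
    (X : Finset V) : 0 ≤ wt p X :=
  mul_nonneg (Finset.prod_nonneg fun _ _ => h0)
    (Finset.prod_nonneg fun _ _ => by linarith)

lemma wt_sum {V : Type*} [Fintype V] [DecidableEq V] (p : ℝ) :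
    ∑ X : Finset V, wt p X = 1 := by
  have := Finset.prod_add (fun _ : V => p) (fun _ : V => 1 - p) univ
  simp only [Finset.powerset_univ] at this
  unfold wt
  rw [← this]
  simp

lemma wt_mem {V : Type*} [Fintype V] [DecidableEq V] (p : ℝ) (v : V) :
    ∑ X : Finset V, wt p X * (if v ∈ X then 1 else 0) = p := by
  have := Finset.prod_add (fun _ : V => p) (fun i : V => if i = v then 0 else 1 - p) univ
  simp only [Finset.powerset_univ] at this
  have h2 : ∏ i : V, (p + if i = v then 0 else 1 - p) = p := by
    rw [Finset.prod_eq_single v]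
    · simp
    · intro b _ hb
      simp [hb]
    · simp
  rw [h2] at this
  refine Eq.trans ?_ this.symm
  refine Finset.sum_congr rfl fun X _ => ?_
  unfold wt
  rw [mul_assoc]
  congr 1
  by_cases hv : v ∈ X
  · simp only [hv, if_true, mul_one]
    refine Finset.prod_congr rfl fun i hi => ?_
    have : i ≠ v := by
      rintro rfl
      simp [hv] at hi
    simp [this]
  · have h0 : (∏ i ∈ univ \ X, if i = v then 0 else 1 - p) = 0 :=
      Finset.prod_eq_zero (i := v) (by simp [hv]) (by simp)
    rw [h0]
    simp [hv]

lemma wt_card {V : Type*} [Fintype V] [DecidableEq V] (p : ℝ) :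
    ∑ X : Finset V, wt p X * (X.card : ℝ) = Fintype.card V * p := by
  have h : ∀ X : Finset V, (X.card : ℝ) = ∑ v : V, (if v ∈ X then 1 else 0) := by
    intro X
    simp
  simp_rw [h, Finset.mul_sum]
  rw [Finset.sum_comm]
  simp_rw [wt_mem]
  simp

lemma wt_pow {V : Type*} [Fintype V] [DecidableEq V] (p q : ℝ) (N : Finset V) :
    ∑ X : Finset V, wt p X * q ^ (N ∩ X).card = (p * q + (1 - p)) ^ N.card := by
  have := Finset.prod_add (fun i : V => p * if i ∈ N then q else 1) (fun _ : V => 1 - p) univ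
  simp only [Finset.powerset_univ] at this
  have h2 : ∏ i : V, ((p * if i ∈ N then q else 1) + (1 - p)) = (p * q + (1 - p)) ^ N.card := by
    have h3 : ∀ i : V, ((p * if i ∈ N then q else 1) + (1 - p))
        = if i ∈ N then (p * q + (1 - p)) else 1 := by
      intro i
      split_ifs <;> ring
    simp_rw [h3]
    rw [Finset.prod_ite]
    simp
  rw [h2] at this
  rw [this]
  refine Finset.sum_congr rfl fun X _ => ?_
  unfold wt
  rw [Finset.prod_mul_distrib, Finset.prod_ite, Finset.prod_const q, Finset.prod_const_one,
    mul_one, Finset.filter_mem_eq_inter, Finset.inter_comm X N]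
  ring

lemma exp_neg_lt (c : ℝ) (h : 0 < c) : Real.exp (-c) < 1 - c + c ^ 2 / 2 := by
  have h1 := Real.quadratic_le_exp_of_nonneg h.le
  rw [Real.exp_neg, inv_lt_iff_one_lt_mul₀ (Real.exp_pos c)]
  have : 0 < 1 - c + c ^ 2 / 2 := by nlinarith [sq_nonneg (c - 1)]
  have h4 : 0 < c ^ 4 := by positivity
  nlinarith [mul_le_mul_of_nonneg_left h1 this.le]

theorem k_tuple_domination_ln_threshold_bound
    {V : Type*} [Fintype V] [DecidableEq V]
    (G : SimpleGraph V) [DecidableRel G.Adj]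
    (n : ℕ) (hn : n = Fintype.card V)
    (δ : ℕ) (hδ : δ = G.minDegree)
    (c : ℝ) (hc0 : 0 < c) (hc1 : c < 1)
    (k : ℕ) (hk : 1 ≤ k)
    (hkδ : (k : ℝ) ≤ (1 - c) * Real.log δ) :
    (kTupleDomNum G k : ℝ) <
      (Real.log δ / ((δ : ℝ) + 1) + (k : ℝ) / (δ : ℝ) ^ (0.5 * c ^ 2)) * n := by
  have hk' : (1 : ℝ) ≤ k := by exact_mod_cast hk
  set L := Real.log δ with hL
  have hLpos : 0 < L := by
    by_contra hcon
    push Not at hcon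
    nlinarith
  have hδpos : 0 < δ := by
    rcases Nat.eq_zero_or_pos δ with h | h
    · rw [h] at hL
      simp at hL
      linarith
    · exact h
  have hδr : (0 : ℝ) < δ := by exact_mod_cast hδpos
  have hLδ : L ≤ δ := by
    have := Real.log_le_sub_one_of_pos hδr
    linarith
  have hkle : k ≤ δ := by
    have : (k : ℝ) ≤ δ := by nlinarith
    exact_mod_cast this
  have hV : Nonempty V := by
    by_contra hcon
    rw [not_nonempty_iff] at hcon
    rw [SimpleGraph.minDegree_of_subsingleton] at hδ
    omega
  have hnpos : (0 : ℝ) < n := by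
    rw [hn]
    exact_mod_cast Fintype.card_pos
  set N : V → Finset V := fun v => insert v (G.neighborFinset v) with hN
  have hNc : ∀ v, δ + 1 ≤ (N v).card := by
    intro v
    simp only [hN]
    rw [Finset.card_insert_of_notMem (by simp), SimpleGraph.card_neighborFinset_eq_degree, hδ]
    have := G.minDegree_le_degree v
    omega
  set p := L / ((δ : ℝ) + 1) with hp
  have hp0 : 0 ≤ p := by positivity
  have hp1 : p ≤ 1 := by
    rw [hp, div_le_one (by positivity)]
    linarith
  have hpL : p * ((δ : ℝ) + 1) = L := by
    rw [hp]
    field_simp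
  set q := Real.exp (-c) with hq
  have hq1 : q < 1 - c + c ^ 2 / 2 := exp_neg_lt c hc0
  have hqpos : 0 < q := Real.exp_pos _
  have hqle : q ≤ 1 := by nlinarith
  -- deterministic bound
  have hdet : ∀ X : Finset V, (kTupleDomNum G k : ℝ) ≤
      X.card + ∑ v, (k : ℝ) * Real.exp (c * k) * q ^ (N v ∩ X).card := by
    intro X
    obtain ⟨Y, hY, hYc⟩ := aux_extend N k (fun v => by have := hNc v; omega) X
    have h1 : kTupleDomNum G k ≤ Y.card := Nat.sInf_le ⟨Y, hY, rfl⟩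
    have h2 : (kTupleDomNum G k : ℝ) ≤ ((X.card + ∑ v, (k - (N v ∩ X).card) : ℕ) : ℝ) := by
      exact_mod_cast h1.trans hYc
    refine h2.trans ?_
    push_cast
    gcongr with v
    rw [hq, ← Real.exp_nat_mul, mul_assoc, ← Real.exp_add]
    rcases le_total k (N v ∩ X).card with h | h
    · rw [Nat.sub_eq_zero_of_le h]
      simp only [Nat.cast_zero]
      positivity
    · have h3 : ((k - (N v ∩ X).card : ℕ) : ℝ) ≤ k := by
        exact_mod_cast Nat.sub_le _ _
      have h4 : ((N v ∩ X).card : ℝ) ≤ k := by exact_mod_cast h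
      have h5 : 1 ≤ Real.exp (c * k + ((N v ∩ X).card : ℝ) * -c) := by
        rw [Real.one_le_exp_iff]
        nlinarith
      nlinarith
  have hvert : ∀ v, (k : ℝ) * Real.exp (c * k) * (p * q + (1 - p)) ^ (N v).card
      < (k : ℝ) / (δ : ℝ) ^ (0.5 * c ^ 2) := by
    intro v
    have hb0 : 0 ≤ p * q + (1 - p) := by
      have := mul_nonneg hp0 hqpos.le
      linarith
    have hb1 : p * q + (1 - p) ≤ 1 := by nlinarith
    have e1 : (p * q + (1 - p)) ^ (N v).card ≤ (p * q + (1 - p)) ^ (δ + 1) :=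
      pow_le_pow_of_le_one hb0 hb1 (hNc v)
    have e2 : p * q + (1 - p) ≤ Real.exp (-(p * (1 - q))) := by
      have := Real.add_one_le_exp (-(p * (1 - q)))
      linarith
    have e3 : (p * q + (1 - p)) ^ (δ + 1) ≤ Real.exp (-(L * (1 - q))) := by
      refine (pow_le_pow_left₀ hb0 e2 _).trans ?_
      rw [← Real.exp_nat_mul, ← hpL]
      push_cast
      apply le_of_eq
      congr 1
      ring
    have e4 : (δ : ℝ) ^ (0.5 * c ^ 2) = Real.exp (L * (0.5 * c ^ 2)) :=
      Real.rpow_def_of_pos hδr _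
    rw [e4, div_eq_mul_inv, ← Real.exp_neg, mul_assoc]
    apply mul_lt_mul_of_pos_left _ (by linarith)
    calc _ ≤ Real.exp (c * k) * Real.exp (-(L * (1 - q))) := by
          gcongr
          exact e1.trans e3
      _ < _ := by
          rw [← Real.exp_add, Real.exp_lt_exp]
          have a1 := mul_le_mul_of_nonneg_left hkδ hc0.le
          have a2 := mul_lt_mul_of_pos_left hq1 hLpos
          nlinarith
  calc (kTupleDomNum G k : ℝ) = ∑ X : Finset V, wt p X * (kTupleDomNum G k : ℝ) := by
        rw [← Finset.sum_mul, wt_sum, one_mul]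
    _ ≤ ∑ X : Finset V, wt p X *
        (X.card + ∑ v, (k : ℝ) * Real.exp (c * k) * q ^ (N v ∩ X).card) :=
        Finset.sum_le_sum fun X _ => mul_le_mul_of_nonneg_left (hdet X) (wt_nonneg p hp0 hp1 X)
    _ = n * p + ∑ v, (k : ℝ) * Real.exp (c * k) * (p * q + (1 - p)) ^ (N v).card := by
        simp_rw [mul_add, Finset.sum_add_distrib, wt_card, ← hn, Finset.mul_sum]
        rw [Finset.sum_comm]
        congr 1
        refine Finset.sum_congr rfl fun v _ => ?_
        rw [← wt_pow, Finset.mul_sum]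
        refine Finset.sum_congr rfl fun X _ => ?_
        ring
    _ < n * p + ∑ _v : V, (k : ℝ) / (δ : ℝ) ^ (0.5 * c ^ 2) := by
        have := Finset.sum_lt_sum_of_nonempty (s := (univ : Finset V)) univ_nonempty
          (fun v _ => hvert v)
        linarith
    _ = _ := by
        rw [Finset.sum_const, Finset.card_univ, ← hn, nsmul_eq_mul]
        ring
end

section
/- Let 0 < c < 1 be a real constant and k ≥ 1, l ≥ 1 integers with μ = max{k, l}. For any finite simple graph G of order n with minimum degree δ such that μ ≤ (1−c)·ln δ, the parametric domination number satisfies the strict inequality γ_{k,l}(G) < (ln δ/(δ+1) + μ/δ^{0.5·c²}) · n. -/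
open Finset Real

/-- The product weights: the generating function of `|S ∩ A|` for a random set `A`. -/
lemma aux_gen {V : Type*} [Fintype V] [DecidableEq V] (p x : ℝ) (S : Finset V) :
    ∑ A ∈ (univ : Finset V).powerset, (p ^ A.card * (1 - p) ^ (univ \ A).card) * x ^ (S ∩ A).card
      = (1 - p + p * x) ^ S.card := by
  have h := Finset.prod_add (fun i => p * (if i ∈ S then x else 1)) (fun _ : V => 1 - p) univ
  have h2 : ∏ i : V, (p * (if i ∈ S then x else 1) + (1 - p)) = (1 - p + p * x) ^ S.card := by
    have : ∀ i : V, (p * (if i ∈ S then x else 1) + (1 - p))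
        = if i ∈ S then (1 - p + p * x) else 1 := by
      intro i
      split_ifs <;> ring
    simp only [this]
    rw [Finset.prod_ite_mem, univ_inter, Finset.prod_const]
  rw [← h2, h]
  refine Finset.sum_congr rfl fun A _ => ?_
  rw [Finset.prod_mul_distrib, Finset.prod_const, Finset.prod_const, Finset.prod_ite_mem,
    Finset.prod_const, Finset.inter_comm A S]
  ring

/-- First-moment method. -/
lemma aux_exists {V : Type*} [Fintype V] [DecidableEq V] (p x K q : ℝ) (hp0 : 0 ≤ p) (hp1 : p ≤ 1)
    (S : V → Finset V) (hq : ∀ v, K * (1 - p + p * x) ^ (S v).card ≤ q) :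
    ∃ A : Finset V, (A.card : ℝ) + ∑ v, K * x ^ (S v ∩ A).card ≤ (p + q) * Fintype.card V := by
  set w : Finset V → ℝ := fun A => p ^ A.card * (1 - p) ^ (univ \ A).card with hw
  have hw0 : ∀ A, 0 ≤ w A := fun A => mul_nonneg (pow_nonneg hp0 _) (pow_nonneg (by linarith) _)
  have hw1 : ∑ A ∈ (univ : Finset V).powerset, w A = 1 := by
    have := aux_gen p 1 (∅ : Finset V)
    simpa [hw] using this
  have hcard : ∑ A ∈ (univ : Finset V).powerset, w A * (A.card : ℝ) = p * Fintype.card V := by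
    have e : ∀ A : Finset V, (A.card : ℝ) = ∑ i : V, (1 - (0:ℝ) ^ (({i} : Finset V) ∩ A).card) := by
      intro A
      have : ∀ i : V, (1 - (0:ℝ) ^ (({i} : Finset V) ∩ A).card) = if i ∈ A then 1 else 0 := by
        intro i
        by_cases hi : i ∈ A
        · simp [hi]
        · simp [hi]
      simp [this]
    calc _ = ∑ A ∈ (univ : Finset V).powerset, ∑ i : V,
          (w A - w A * (0:ℝ) ^ (({i} : Finset V) ∩ A).card) := by
            refine Finset.sum_congr rfl fun A _ => ?_
            rw [e A, Finset.mul_sum]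
            exact Finset.sum_congr rfl fun i _ => by ring
      _ = ∑ i : V, p := by
            rw [Finset.sum_comm]
            refine Finset.sum_congr rfl fun i _ => ?_
            rw [Finset.sum_sub_distrib, hw1, aux_gen p 0 {i}]
            simp
      _ = _ := by simp [mul_comm]
  have hsec : ∑ A ∈ (univ : Finset V).powerset, w A * (∑ v, K * x ^ (S v ∩ A).card)
      ≤ q * Fintype.card V := by
    calc _ = ∑ v, K * ∑ A ∈ (univ : Finset V).powerset, w A * x ^ (S v ∩ A).card := by
            simp only [Finset.mul_sum]
            rw [Finset.sum_comm]
            exact Finset.sum_congr rfl fun i _ => Finset.sum_congr rfl fun A _ => by ring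
      _ ≤ ∑ v : V, q := by
            refine Finset.sum_le_sum fun v _ => ?_
            rw [aux_gen p x (S v)]
            exact hq v
      _ = _ := by simp [mul_comm]
  by_contra hcon
  push Not at hcon
  have hlt : ∑ A ∈ (univ : Finset V).powerset, w A * ((p + q) * Fintype.card V)
      < ∑ A ∈ (univ : Finset V).powerset,
        w A * ((A.card : ℝ) + ∑ v, K * x ^ (S v ∩ A).card) := by
    apply Finset.sum_lt_sum
    · intro A _
      exact mul_le_mul_of_nonneg_left (hcon A).le (hw0 A)
    · by_contra hne
      push Not at hne
      have : ∑ A ∈ (univ : Finset V).powerset, w A ≤ 0 := by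
        refine Finset.sum_nonpos fun A hA => ?_
        by_contra hpos
        push Not at hpos
        exact absurd (hne A hA) (not_le.mpr (mul_lt_mul_of_pos_left (hcon A) hpos))
      linarith
  rw [← Finset.sum_mul, hw1] at hlt
  simp only [mul_add, Finset.sum_add_distrib] at hlt
  rw [hcard] at hlt
  linarith

/-- Completing a set greedily. -/
lemma aux_det {V : Type*} [Fintype V] [DecidableEq V]
    (G : SimpleGraph V) [DecidableRel G.Adj] (k l μ : ℕ) (hk : k ≤ μ) (hl : l ≤ μ)
    (hdeg : ∀ v, μ ≤ (insert v (G.neighborFinset v)).card) (A : Finset V) :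
    paramDomNum G k l ≤ A.card + ∑ v, (μ - (insert v (G.neighborFinset v) ∩ A).card) := by
  have hB : ∀ v, ∃ B ⊆ insert v (G.neighborFinset v) \ A,
      B.card = μ - (insert v (G.neighborFinset v) ∩ A).card := by
    intro v
    apply Finset.exists_subset_card_eq
    have := Finset.card_sdiff_add_card_inter (insert v (G.neighborFinset v)) A
    have := hdeg v
    omega
  choose B hBs hBc using hB
  set D := A ∪ univ.biUnion B with hD
  have hdom : ∀ v, μ ≤ (insert v (G.neighborFinset v) ∩ D).card := by
    intro v
    have hsub : (insert v (G.neighborFinset v) ∩ A) ∪ B v ⊆ insert v (G.neighborFinset v) ∩ D := by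
      intro u hu
      rcases Finset.mem_union.mp hu with hu | hu
      · exact Finset.mem_inter.mpr ⟨(Finset.mem_inter.mp hu).1,
          Finset.mem_union_left _ (Finset.mem_inter.mp hu).2⟩
      · exact Finset.mem_inter.mpr ⟨(Finset.mem_sdiff.mp (hBs v hu)).1,
          Finset.mem_union_right _ (Finset.mem_biUnion.mpr ⟨v, Finset.mem_univ v, hu⟩)⟩
    have hdis : Disjoint (insert v (G.neighborFinset v) ∩ A) (B v) := by
      rw [Finset.disjoint_left]
      intro u hu hu'
      exact (Finset.mem_sdiff.mp (hBs v hu')).2 (Finset.mem_inter.mp hu).2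
    have h1 := Finset.card_le_card hsub
    rw [Finset.card_union_of_disjoint hdis, hBc v] at h1
    omega
  have hle : paramDomNum G k l ≤ D.card :=
    Nat.sInf_le ⟨D, fun v _ => hk.trans (hdom v), fun v _ => hl.trans (hdom v), rfl⟩
  refine hle.trans ((Finset.card_union_le _ _).trans ?_)
  gcongr
  refine Finset.card_biUnion_le.trans ?_
  exact Finset.sum_le_sum fun v _ => (hBc v).le

/-- The strict Chernoff exponent inequality. -/
lemma aux_exponent (c : ℝ) (hc0 : 0 < c) (hc1 : c < 1) :
    c ^ 2 / 2 < c + (1 - c) * Real.log (1 - c) := by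
  have hy : 0 < 1 - c := by linarith
  have hlog : Real.log (1 - c) < 0 := Real.log_neg hy (by linarith)
  have h := Real.sinh_lt_self_iff.mpr hlog
  rw [Real.sinh_log hy] at h
  have h2 := mul_lt_mul_of_pos_left h hy
  have h3 : (1 - c) * ((1 - c - (1 - c)⁻¹) / 2) = c ^ 2 / 2 - c := by
    field_simp
    ring
  linarith

theorem param_domination_ln_threshold_bound
    {V : Type*} [Fintype V] [DecidableEq V]
    (G : SimpleGraph V) [DecidableRel G.Adj]
    (n : ℕ) (hn : n = Fintype.card V)
    (δ : ℕ) (hδ : δ = G.minDegree)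
    (c : ℝ) (hc0 : 0 < c) (hc1 : c < 1)
    (k l : ℕ) (hk : 1 ≤ k) (hl : 1 ≤ l)
    (μ : ℕ) (hμ : μ = max k l)
    (hμδ : (μ : ℝ) ≤ (1 - c) * Real.log δ) :
    (paramDomNum G k l : ℝ) <
      (Real.log δ / ((δ : ℝ) + 1) + (μ : ℝ) / (δ : ℝ) ^ (0.5 * c ^ 2)) * n := by
  have hkμ : k ≤ μ := hμ ▸ le_max_left k l
  have hlμ : l ≤ μ := hμ ▸ le_max_right k l
  have hμ1 : (1:ℝ) ≤ μ := by exact_mod_cast hk.trans hkμ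
  have hy : 0 < 1 - c := by linarith
  set m := Real.log δ with hm
  have hm0 : 0 < m := by
    by_contra hneg
    push Not at hneg
    nlinarith
  have hδ0 : 0 < δ := by
    rcases Nat.eq_zero_or_pos δ with h | h
    · simp [hm, h] at hm0
    · exact h
  have hδR : (0:ℝ) < δ := by exact_mod_cast hδ0
  have hmδ : m ≤ δ - 1 := Real.log_le_sub_one_of_pos hδR
  have hμleδ : μ ≤ δ := by
    have : (μ : ℝ) ≤ δ := by nlinarith
    exact_mod_cast this
  have hne : Nonempty V := by
    by_contra h
    rw [not_nonempty_iff] at h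
    have : G.minDegree = 0 := by simp
    omega
  have hcardN : ∀ v, δ + 1 ≤ (insert v (G.neighborFinset v)).card := by
    intro v
    rw [Finset.card_insert_of_notMem (by simp), G.card_neighborFinset_eq_degree]
    have := G.minDegree_le_degree v
    omega
  set p := m / ((δ:ℝ) + 1) with hp
  have hp0 : 0 ≤ p := by positivity
  have hp1 : p ≤ 1 := by
    rw [hp, div_le_one (by linarith)]
    linarith
  set x := 1 - c with hx
  set K : ℝ := μ * x ^ (-(x * m)) with hK
  have hK0 : 0 < K := by positivity
  have hq : ∀ v, K * (1 - p + p * x) ^ (insert v (G.neighborFinset v)).card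
      ≤ K * Real.exp (-(c * m)) := by
    intro v
    apply mul_le_mul_of_nonneg_left _ hK0.le
    have e1 : 1 - p + p * x = 1 - c * p := by rw [hx]; ring
    have hcp : c * p ≤ 1 := by nlinarith
    rw [e1]
    calc (1 - c * p) ^ (insert v (G.neighborFinset v)).card
        ≤ (1 - c * p) ^ (δ + 1) :=
          pow_le_pow_of_le_one (by linarith) (by nlinarith) (hcardN v)
      _ ≤ (Real.exp (-(c * p))) ^ (δ + 1) :=
          pow_le_pow_left₀ (by linarith) (Real.one_sub_le_exp_neg _) _
      _ = Real.exp (-(c * m)) := by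
          rw [← Real.exp_nat_mul, hp]
          congr 1
          push_cast
          field_simp
  have hstrict : K * Real.exp (-(c * m)) < (μ : ℝ) / (δ : ℝ) ^ (0.5 * c ^ 2) := by
    rw [hK, Real.rpow_def_of_pos hy, Real.rpow_def_of_pos hδR, mul_assoc, ← Real.exp_add,
      div_eq_mul_inv, ← Real.exp_neg]
    apply mul_lt_mul_of_pos_left _ (by linarith)
    apply Real.exp_lt_exp.mpr
    have h := mul_lt_mul_of_pos_left (aux_exponent c hc0 hc1) hm0
    rw [← hx] at h
    rw [← hm]
    norm_num
    nlinarith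
  obtain ⟨A, hA⟩ := aux_exists p x K _ hp0 hp1 (fun v => insert v (G.neighborFinset v)) hq
  have hdet := aux_det G k l μ hkμ hlμ (fun v => by have := hcardN v; omega) A
  have hterm : ∀ v, ((μ - (insert v (G.neighborFinset v) ∩ A).card : ℕ) : ℝ)
      ≤ K * x ^ (insert v (G.neighborFinset v) ∩ A).card := by
    intro v
    set X := (insert v (G.neighborFinset v) ∩ A).card with hX
    rcases le_or_gt μ X with h | h
    · rw [Nat.sub_eq_zero_of_le h]
      have := mul_pos hK0 (pow_pos hy X)
      simpa using this.le
    · have h1 : ((μ - X : ℕ) : ℝ) ≤ μ := by exact_mod_cast Nat.sub_le μ X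
      have h2 : (1:ℝ) ≤ x ^ (-(x * m)) * x ^ X := by
        rw [← Real.rpow_natCast, ← Real.rpow_add hy]
        apply Real.one_le_rpow_of_pos_of_le_one_of_nonpos hy (by linarith)
        have : (X:ℝ) < μ := by exact_mod_cast h
        linarith
      rw [hK, mul_assoc]
      nlinarith
  have hdetR : (paramDomNum G k l : ℝ) ≤ (A.card : ℝ) +
      ∑ v, ((μ - (insert v (G.neighborFinset v) ∩ A).card : ℕ) : ℝ) := by
    exact_mod_cast hdet
  have hsum := Finset.sum_le_sum fun v (_ : v ∈ (univ : Finset V)) => hterm v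
  have hn0 : (0:ℝ) < n := by
    rw [hn]
    exact_mod_cast Fintype.card_pos
  rw [← hn] at hA
  have hfin := mul_lt_mul_of_pos_right hstrict hn0
  rw [add_mul] at hA ⊢
  linarith
end
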